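/- Let a, c ∈ ℝ with a ≠ 0, and let σ > 0. Then the complex eigenvalues of the real 2×2 matrix M = [[0, −a], [a, 2cσ²]] are λ_{1/2} = cσ² ± √(c²σ⁴ − a²) (where the square root of a negative real number is taken in ℂ). If in addition c < 0, then both eigenvalues of M have strictly negative real part. -/

import Mathlib

open Matrix

/-- The complex eigenvalues of `M = [[0, −a], [a, 2cσ²]]` (with `a ≠ 0`, `σ > 0`) are
`cσ² ± √(c²σ⁴ − a²)` (square root taken in `ℂ`); if moreover `c < 0`, both eigenvalues
have strictly negative real part. This is the Jacobian of the Dirac-GAN with instance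
noise, with `a = f′(0)`, `c = f″(0)`. -/
theorem instance_noise_eigenvalues
    (a c σ : ℝ) (ha : a ≠ 0) (hσ : 0 < σ)
    (M : Matrix (Fin 2) (Fin 2) ℝ) (hM : M = !![0, -a; a, 2 * c * σ ^ 2]) :
    (∃ z : ℂ, z ^ 2 = (Complex.ofReal c) ^ 2 * (Complex.ofReal σ) ^ 4
          - (Complex.ofReal a) ^ 2 ∧
      spectrum ℂ (M.map Complex.ofReal)
        = {Complex.ofReal (c * σ ^ 2) + z, Complex.ofReal (c * σ ^ 2) - z}) ∧
    (c < 0 → ∀ lam ∈ spectrum ℂ (M.map Complex.ofReal), lam.re < 0) := by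
  have key : ∀ lam : ℂ, lam ∈ spectrum ℂ (M.map Complex.ofReal) ↔
      lam * (lam - 2 * (c : ℂ) * (σ : ℂ) ^ 2) + (a : ℂ) ^ 2 = 0 := by
    intro lam
    have hdet : (algebraMap ℂ (Matrix (Fin 2) (Fin 2) ℂ) lam - M.map Complex.ofReal).det
        = lam * (lam - 2 * (c : ℂ) * (σ : ℂ) ^ 2) + (a : ℂ) ^ 2 := by
      subst hM
      rw [Matrix.det_fin_two]
      simp [Matrix.algebraMap_matrix_apply]
      ring
    rw [spectrum.mem_iff, Matrix.isUnit_iff_isUnit_det, hdet, isUnit_iff_ne_zero, not_not]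
  constructor
  · obtain ⟨z, hz⟩ := IsAlgClosed.exists_pow_nat_eq
      ((c : ℂ) ^ 2 * (σ : ℂ) ^ 4 - (a : ℂ) ^ 2) (n := 2) (by norm_num)
    refine ⟨z, hz, ?_⟩
    ext lam
    rw [key, Set.mem_insert_iff, Set.mem_singleton_iff]
    have hfac : lam * (lam - 2 * (c : ℂ) * (σ : ℂ) ^ 2) + (a : ℂ) ^ 2
        = (lam - (((c * σ ^ 2 : ℝ) : ℂ) + z)) * (lam - (((c * σ ^ 2 : ℝ) : ℂ) - z)) := by
      push_cast
      linear_combination (-1 : ℂ) * (-hz)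
    rw [hfac, mul_eq_zero, sub_eq_zero, sub_eq_zero]
  · intro hc lam hlam
    rw [key] at hlam
    have hb : c * σ ^ 2 < 0 := mul_neg_of_neg_of_pos hc (by positivity)
    have ha2 : 0 < a ^ 2 := by positivity
    have e : lam * (lam - ((2 * (c * σ ^ 2) : ℝ) : ℂ)) + ((a ^ 2 : ℝ) : ℂ) = 0 := by
      rw [← hlam]
      push_cast
      ring
    generalize c * σ ^ 2 = b at hb e
    have h1 := congrArg Complex.re e
    have h2 := congrArg Complex.im e
    simp only [Complex.add_re, Complex.add_im, Complex.mul_re, Complex.mul_im, Complex.sub_re,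
      Complex.sub_im, Complex.ofReal_re, Complex.ofReal_im, Complex.zero_re,
      Complex.zero_im] at h1 h2
    have h3 : lam.im * (lam.re - b) = 0 := by linarith
    rcases mul_eq_zero.mp h3 with h | h
    · rw [h] at h1
      by_contra! hx
      nlinarith [mul_nonneg hx (neg_nonneg.mpr hb.le), mul_nonneg hx hx]
    · linarith
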